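/- Let d ≥ 1 be an integer and 0 < p_i ≤ u_i < ∞ for i = 1, 2, with p1 < p2 and p2/u2 > p1/u1. Let r > 0 satisfy 1/r > 1/p1 − 1/p2. Then there exists a constant c > 0 such that for all j ∈ ℕ₀ and all k ∈ ℕ: k^{1/r} · e_k(id_j) ≤ c · 2^{jd(1/r − 1/u1 + 1/u2)}. -/

import Mathlib

open scoped ENNReal NNReal

noncomputable section

/-- `Q_{j,m} ⊆ Q = [0,1)^d` iff `0 ≤ m i < 2^j` for every coordinate `i`. -/
def inUnitCube (d j : ℕ) (m : Fin d → ℤ) : Prop :=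
  ∀ i, 0 ≤ m i ∧ m i < 2 ^ j

/-- For `ν ≤ j`: `Q_{j,m} ⊆ Q_{ν,k}`. -/
def cubeSub (d j ν : ℕ) (m k : Fin d → ℤ) : Prop :=
  ∀ i, k i * 2 ^ (j - ν) ≤ m i ∧ m i < (k i + 1) * 2 ^ (j - ν)

/-- The finite-dimensional Morrey quasi-norm `‖· | m^{2^{jd}}_{u,p}‖` (`ℝ≥0∞`-valued),
on coefficients indexed by the `m ∈ ℤ^d` with `Q_{j,m} ⊆ Q` (other coordinates are ignored). -/
def mNorm (d : ℕ) (u p : ℝ) (j : ℕ) (lam : (Fin d → ℤ) → ℂ) : ℝ≥0∞ :=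
  ⨆ νk : {νk : ℕ × (Fin d → ℤ) // νk.1 ≤ j ∧ inUnitCube d νk.1 νk.2},
    (2 : ℝ≥0∞) ^ ((d : ℝ) * ((j : ℝ) - (νk.1.1 : ℝ)) * (1 / u - 1 / p)) *
      (∑' m : {m : Fin d → ℤ // cubeSub d j νk.1.1 m νk.1.2},
        ((‖lam m.1‖₊ : ℝ≥0∞)) ^ p) ^ (1 / p)

/-- The `ℓ_q^{2^{jd}}` quasi-norm (`0 < q < ∞`) on level-`j` coefficients. -/
def lqNorm (d : ℕ) (q : ℝ) (j : ℕ) (lam : (Fin d → ℤ) → ℂ) : ℝ≥0∞ :=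
  (∑' m : {m : Fin d → ℤ // inUnitCube d j m}, ((‖lam m.1‖₊ : ℝ≥0∞)) ^ q) ^ (1 / q)

/-- The quasi-norm of the sequence space `ñ^σ_{u,p,q}(Q)`, `q ∈ (0,∞]`. -/
def nNorm (d : ℕ) (σ u p : ℝ) (q : ℝ≥0∞) (lam : ℕ → (Fin d → ℤ) → ℂ) : ℝ≥0∞ :=
  if q = ∞ then
    ⨆ j : ℕ, (2 : ℝ≥0∞) ^ ((j : ℝ) * (σ - d / u)) * mNorm d u p j (lam j)
  else
    (∑' j : ℕ, ((2 : ℝ≥0∞) ^ ((j : ℝ) * (σ - d / u)) * mNorm d u p j (lam j)) ^ q.toReal) ^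
      (1 / q.toReal)

/-- `k`-th entropy number of the identity map between two quasi-norms on one ambient group:
the infimum of all `ε > 0` such that the `N₁`-unit ball is covered by `2^(k-1)` `N₂`-balls of
radius `ε`. -/
def entropyNumber {Λ : Type*} [AddCommGroup Λ] (N₁ N₂ : Λ → ℝ≥0∞) (k : ℕ) : ℝ≥0∞ :=
  sInf {ε : ℝ≥0∞ | 0 < ε ∧ ∃ c : Fin (2 ^ (k - 1)) → Λ,
    ∀ x : Λ, N₁ x ≤ 1 → ∃ i, N₂ (x - c i) ≤ ε}

/-- Operator quasi-norm of the identity map between two quasi-norms on one ambient space: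
the smallest `C` with `N₂ x ≤ C · N₁ x` for all `x`. -/
def opNorm {Λ : Type*} (N₁ N₂ : Λ → ℝ≥0∞) : ℝ≥0∞ :=
  sInf {C : ℝ≥0∞ | ∀ x, N₂ x ≤ C * N₁ x}

end


/-!
Let `x` lie in the unit ball of the source. Rounding the real and imaginary parts of its coordinates
towards zero to multiples of `T` leaves an error `y` with `|y_m| ≤ 2 min(|x_m|, T)`, hence
`|y_m|^p₂ ≤ 2^p₂ T^(p₂ - p₁) |x_m|^p₁`. Summing over each dyadic cube bounds the target norm of `y`
in terms of the source norm of `x`, and `p₁/u₁ ≤ p₂/u₂` makes the unit cube the worst one. Up to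
scaling, the rounded points are integer points of an `ℓ_p₁`-ball in dimension `2 · 2^(jd)`.
Chernoff's method counts these, because `∑ n, exp (-θ |n|^p) ≤ exp (C θ^(-q))` for every `q > 0`, a
bound that tensorizes. Choosing `T` so that the count is at most `2^(k - 1)` gives the entropy
estimate; the freedom in `q` is what the strict inequality `1/p₁ - 1/p₂ < 1/r` pays for.
-/

open Finset Real
open scoped Cardinal

section PartitionFunction

lemma one_add_le_exp_mul_rpow_inv {b v : ℝ} (hb : 1 ≤ b) (hv : 0 ≤ v) :
    1 + v ≤ exp (b * v ^ b⁻¹) := by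
  have hb0 : 0 < b := one_pos.trans_le hb
  calc 1 + v = 1 ^ b + (v ^ b⁻¹) ^ b := by rw [one_rpow, rpow_inv_rpow hv hb0.ne']
    _ ≤ (1 + v ^ b⁻¹) ^ b := add_rpow_le_rpow_add zero_le_one (by positivity) hb
    _ ≤ exp (v ^ b⁻¹) ^ b := by
        gcongr
        linarith [add_one_le_exp (v ^ b⁻¹)]
    _ = exp (b * v ^ b⁻¹) := by rw [← exp_mul, mul_comm]

lemma exp_neg_le_mul_rpow_neg {a y : ℝ} (ha : 0 < a) (hy : 0 < y) :
    exp (-y) ≤ a ^ a * y ^ (-a) := by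
  have h : (y / a) ^ a ≤ exp y :=
    calc (y / a) ^ a ≤ exp (y / a) ^ a := by
          gcongr
          linarith [add_one_le_exp (y / a)]
      _ = exp y := by rw [← exp_mul, div_mul_cancel₀ y ha.ne']
  calc exp (-y) ≤ ((y / a) ^ a)⁻¹ := by
        rw [exp_neg]
        gcongr
    _ = a ^ a * y ^ (-a) := by
        rw [div_rpow hy.le ha.le, inv_div, rpow_neg hy.le, div_eq_mul_inv]

lemma sum_exp_neg_mul_rpow_le_one_add {p a θ : ℝ} (hp : 0 < p) (hpa : 1 < p * a) (hθ : 0 < θ)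
    (s : Finset ℤ) :
    ∑ n ∈ s, exp (-(θ * |(n : ℝ)| ^ p)) ≤
      1 + a ^ a * θ ^ (-a) * ∑' n : ℤ, |(n : ℝ)| ^ (-(p * a)) := by
  have ha : 0 < a := pos_of_mul_pos_right (one_pos.trans hpa) hp.le
  have hterm (n : ℤ) : exp (-(θ * |(n : ℝ)| ^ p)) ≤
      (if n = 0 then 1 else 0) + a ^ a * θ ^ (-a) * |(n : ℝ)| ^ (-(p * a)) := by
    rcases eq_or_ne n 0 with rfl | hn
    · simp [zero_rpow, hp.ne', ha.ne']
    · have hn0 : 0 < |(n : ℝ)| := by positivity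
      rw [if_neg hn, zero_add, mul_assoc, neg_mul_eq_mul_neg p a, rpow_mul hn0.le,
        ← mul_rpow hθ.le (by positivity)]
      exact exp_neg_le_mul_rpow_neg ha (by positivity)
  calc ∑ n ∈ s, exp (-(θ * |(n : ℝ)| ^ p))
      ≤ (∑ n ∈ s, if n = 0 then 1 else 0) +
          a ^ a * θ ^ (-a) * ∑ n ∈ s, |(n : ℝ)| ^ (-(p * a)) := by
        rw [mul_sum, ← sum_add_distrib]
        exact sum_le_sum fun n _ => hterm n
    _ ≤ 1 + a ^ a * θ ^ (-a) * ∑' n : ℤ, |(n : ℝ)| ^ (-(p * a)) := by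
        gcongr
        · rw [sum_ite_eq']
          split_ifs <;> norm_num
        · exact (summable_abs_int_rpow hpa).sum_le_tsum s fun n _ => by positivity

-- A one-dimensional `O(θ^(-a))` tail with `a ≥ q` is turned into `exp (O(θ^(-q)))`, the shape which
-- tensorizes.
lemma exists_sum_exp_neg_mul_rpow_le {p q : ℝ} (hp : 0 < p) (hq : 0 < q) :
    ∃ C : ℝ, 0 < C ∧ ∀ θ : ℝ, 0 < θ → ∀ s : Finset ℤ,
      ∑ n ∈ s, exp (-(θ * |(n : ℝ)| ^ p)) ≤ exp (C * θ ^ (-q)) := by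
  set a : ℝ := q + 1 / p
  have hpa : 1 < p * a := by
    have : p * a = p * q + 1 := by simp only [a]; field_simp
    linarith [mul_pos hp hq]
  have ha : 0 < a := by positivity
  have hb : 1 ≤ a / q := (one_le_div hq).2 (le_add_of_nonneg_right (by positivity))
  set D : ℝ := a ^ a * ∑' n : ℤ, |(n : ℝ)| ^ (-(p * a))
  have hD : 0 < D :=
    mul_pos (by positivity)
      ((summable_abs_int_rpow hpa).tsum_pos (fun n => by positivity) 1 (by simp))
  refine ⟨a / q * D ^ (a / q)⁻¹, by positivity, fun θ hθ s => ?_⟩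
  calc ∑ n ∈ s, exp (-(θ * |(n : ℝ)| ^ p)) ≤ 1 + D * θ ^ (-a) :=
        (sum_exp_neg_mul_rpow_le_one_add hp hpa hθ s).trans_eq (by ring)
    _ ≤ exp (a / q * (D * θ ^ (-a)) ^ (a / q)⁻¹) :=
        one_add_le_exp_mul_rpow_inv hb (by positivity)
    _ = exp (a / q * D ^ (a / q)⁻¹ * θ ^ (-q)) := by
        rw [mul_rpow hD.le (by positivity), ← rpow_mul hθ.le, ← mul_assoc]
        congr 3
        field_simp

end PartitionFunction

section LatticePoints

-- Chernoff's method: `1 ≤ exp (K - ∑ i, w (f i))` on `F`, and the sum of the right-hand side over a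
-- box factorizes.
lemma card_le_exp_of_sum_le {ι α : Type*} [Fintype ι] {w : α → ℝ} {B K : ℝ}
    (hB : ∀ s : Finset α, ∑ a ∈ s, exp (-w a) ≤ exp B) {F : Finset (ι → α)}
    (hF : ∀ f ∈ F, ∑ i, w (f i) ≤ K) : (F.card : ℝ) ≤ exp (K + Fintype.card ι * B) := by
  classical
  set box : Finset (ι → α) := Fintype.piFinset fun i => F.image fun f => f i
  have hbox : F ⊆ box := fun f hf =>
    Fintype.mem_piFinset.2 fun i => mem_image_of_mem (fun f => f i) hf
  calc (F.card : ℝ) = ∑ f ∈ F, 1 := by simp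
    _ ≤ ∑ f ∈ F, exp K * ∏ i, exp (-w (f i)) := by
        refine sum_le_sum fun f hf => ?_
        rw [← exp_sum, ← exp_add, sum_neg_distrib]
        exact one_le_exp (by linarith [hF f hf])
    _ ≤ ∑ f ∈ box, exp K * ∏ i, exp (-w (f i)) :=
        sum_le_sum_of_subset_of_nonneg hbox fun _ _ _ => by positivity
    _ = exp K * ∏ i, ∑ a ∈ F.image fun f => f i, exp (-w a) := by
        rw [← mul_sum, prod_univ_sum]
    _ ≤ exp K * ∏ _i : ι, exp B := by
        gcongr
        exact hB _
    _ = exp (K + Fintype.card ι * B) := by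
        rw [prod_const, card_univ, ← exp_nat_mul, exp_add]

/-- The lattice points `f ∈ ℤ^ι` with `‖f‖_p^p ≤ K`; the parameter `K` is the `p`-th power of the
radius. -/
def latticeBall (ι : Type*) [Fintype ι] (p K : ℝ) : Set (ι → ℤ) :=
  {f | ∑ i, |(f i : ℝ)| ^ p ≤ K}

lemma le_two_pow_pred_of_le_exp {n k : ℕ} (hk : 1 ≤ k) (h : (n : ℝ) ≤ exp (log 2 / 2 * k)) :
    n ≤ 2 ^ (k - 1) := by
  have hsq : (n : ℝ) ^ 2 ≤ 2 ^ k :=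
    calc (n : ℝ) ^ 2 ≤ exp (log 2 / 2 * k) ^ 2 := by gcongr
      _ = exp (log 2) ^ k := by
          rw [← exp_nat_mul, ← exp_nat_mul]
          push_cast
          ring_nf
      _ = 2 ^ k := by rw [exp_log two_pos]
  obtain ⟨m, rfl⟩ := Nat.exists_eq_add_of_le' hk
  rw [Nat.add_sub_cancel]
  by_contra! hn
  have : n ^ 2 ≤ 2 ^ (m + 1) := by exact_mod_cast hsq
  nlinarith [pow_succ' 2 m]

-- With `n = Fintype.card ι`, the multiplier `θ` balances the two terms of the Chernoff bound: both
-- are `log 2 / 4 * k`.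
lemma exists_mk_latticeBall_le_two_pow {p g : ℝ} (hp : 0 < p) (hg : 1 < g) :
    ∃ c : ℝ, 0 < c ∧ ∀ (ι : Type*) [Fintype ι] [Nonempty ι] (k : ℕ), 1 ≤ k →
      #(latticeBall ι p (c * Fintype.card ι * (k / Fintype.card ι) ^ g)) ≤
        ((2 ^ (k - 1) : ℕ) : Cardinal) := by
  have hg0 : 0 < g - 1 := sub_pos.2 hg
  obtain ⟨C, hC, hsum⟩ := exists_sum_exp_neg_mul_rpow_le hp (inv_pos.2 hg0)
  set η : ℝ := log 2 / 4 with hη_def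
  have hη : 0 < η := div_pos (log_pos one_lt_two) four_pos
  refine ⟨η * (η / C) ^ (g - 1), by positivity, fun ι _ _ k hk => ?_⟩
  have : (0 : ℝ) < k := by exact_mod_cast hk
  set n : ℝ := (Fintype.card ι : ℝ)
  have hn : 0 < n := Nat.cast_pos.2 Fintype.card_pos
  set K : ℝ := η * (η / C) ^ (g - 1) * n * (k / n) ^ g
  set θ : ℝ := (η / C * (k / n)) ^ (-(g - 1))
  have hθ : 0 < θ := by positivity
  have hθK : θ * K = η * k := by
    simp only [θ, K]
    rw [rpow_neg (by positivity), mul_rpow (by positivity) (by positivity),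
      rpow_sub_one (by positivity : k / n ≠ 0)]
    field_simp
  have hθn : n * (C * θ ^ (-(g - 1)⁻¹)) = η * k := by
    rw [← rpow_mul (by positivity), neg_mul_neg, mul_inv_cancel₀ hg0.ne', rpow_one]
    field_simp
  rw [Cardinal.mk_le_iff_forall_finset_subset_card_le]
  refine fun F hF => le_two_pow_pred_of_le_exp hk ?_
  calc (F.card : ℝ) ≤ exp (θ * K + n * (C * θ ^ (-(g - 1)⁻¹))) := by
        refine card_le_exp_of_sum_le (hsum θ hθ) fun f hf => ?_
        rw [← mul_sum]
        exact mul_le_mul_of_nonneg_left (hF hf) hθ.le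
    _ = exp (log 2 / 2 * k) := by
        rw [hθK, hθn, hη_def]
        ring_nf

end LatticePoints

section Rounding

lemma exists_int_abs_sub_le_min (x : ℝ) : ∃ z : ℤ, |(z : ℝ)| ≤ |x| ∧ |x - z| ≤ min |x| 1 := by
  have hnonneg {x : ℝ} (hx : 0 ≤ x) : |(⌊x⌋ : ℝ)| ≤ |x| ∧ |x - ⌊x⌋| ≤ min |x| 1 := by
    have hfloor : (0 : ℝ) ≤ ⌊x⌋ := by exact_mod_cast Int.floor_nonneg.2 hx
    have hle := Int.floor_le x
    rw [abs_of_nonneg hfloor, abs_of_nonneg hx, abs_of_nonneg (sub_nonneg.2 hle)]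
    exact ⟨hle, le_min (sub_le_self x hfloor) (by linarith [Int.lt_floor_add_one x])⟩
  rcases le_total 0 x with hx | hx
  · exact ⟨⌊x⌋, hnonneg hx⟩
  · refine ⟨-⌊-x⌋, ?_⟩
    have h := hnonneg (neg_nonneg.2 hx)
    rw [abs_neg, ← abs_neg (-x - _)] at h
    rw [Int.cast_neg, abs_neg, sub_neg_eq_add]
    rwa [neg_sub, sub_neg_eq_add, add_comm] at h

lemma exists_gaussian_norm_sub_le_min {T : ℝ} (hT : 0 < T) (x : ℂ) : ∃ z w : ℤ,
    |(z : ℝ)| ≤ ‖x‖ / T ∧ |(w : ℝ)| ≤ ‖x‖ / T ∧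
      ‖x - T * (z + w * Complex.I)‖ ≤ 2 * min ‖x‖ T := by
  have hnorm : ‖x / T‖ = ‖x‖ / T := by rw [norm_div, Complex.norm_of_nonneg hT.le]
  have hre := Complex.abs_re_le_norm (x / T)
  have him := Complex.abs_im_le_norm (x / T)
  rw [hnorm] at hre him
  obtain ⟨z, hz, hxz⟩ := exists_int_abs_sub_le_min (x / T).re
  obtain ⟨w, hw, hxw⟩ := exists_int_abs_sub_le_min (x / T).im
  refine ⟨z, w, hz.trans hre, hw.trans him, ?_⟩
  have hscale : x - T * (z + w * Complex.I) = T * (x / T - (z + w * Complex.I)) := by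
    rw [mul_sub, mul_div_cancel₀ x (Complex.ofReal_ne_zero.2 hT.ne')]
  calc ‖x - T * (z + w * Complex.I)‖ ≤ T * (|(x / T).re - z| + |(x / T).im - w|) := by
        rw [hscale, norm_mul, Complex.norm_of_nonneg hT.le]
        gcongr
        simpa using Complex.norm_le_abs_re_add_abs_im (x / T - (z + w * Complex.I))
    _ ≤ T * (min (‖x‖ / T) 1 + min (‖x‖ / T) 1) := by
        gcongr <;> exact ‹_ ≤ min _ _›.trans (by gcongr)
    _ = 2 * min ‖x‖ T := by
        rw [← two_mul, mul_left_comm, mul_min_of_nonneg _ _ hT.le, mul_div_cancel₀ _ hT.ne',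
          mul_one]

lemma min_rpow_le_rpow_sub_mul_rpow {s t p q : ℝ} (hs : 0 < s) (ht : 0 ≤ t) (hp : 0 < p)
    (hpq : p ≤ q) : min t s ^ q ≤ s ^ (q - p) * t ^ p := by
  have hmin : 0 ≤ min t s := le_min ht hs.le
  have hqp : 0 ≤ q - p := sub_nonneg.2 hpq
  calc min t s ^ q = min t s ^ (q - p) * min t s ^ p := by
        rw [← rpow_add_of_nonneg hmin hqp hp.le, sub_add_cancel]
    _ ≤ s ^ (q - p) * t ^ p := by
        gcongr
        · exact min_le_right _ _
        · exact min_le_left _ _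

/-- The point of the scaled Gaussian lattice `(T • ℤ[i])^ι` whose real and imaginary parts are `T`
times the two halves of `f`. -/
def gaussianPoint {ι : Type*} (T : ℝ) (f : ι ⊕ ι → ℤ) (i : ι) : ℂ :=
  T * (f (.inl i) + f (.inr i) * Complex.I)

-- Rounding towards zero dominates the error both by `x` and by the mesh size `T`; the factor
-- `T ^ (q - p)` is gained by interpolating between the two bounds.
lemma exists_gaussianPoint_near {ι : Type*} [Fintype ι] {p q T R : ℝ} (hp : 0 < p) (hpq : p ≤ q)
    (hT : 0 < T) {x : ι → ℂ} (hx : ∑ i, ‖x i‖ ^ p ≤ R) :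
    ∃ f ∈ latticeBall (ι ⊕ ι) p (2 * (R / T ^ p)),
      ∀ i, ‖x i - gaussianPoint T f i‖ ^ q ≤ 2 ^ q * T ^ (q - p) * ‖x i‖ ^ p := by
  choose z w hz hw hzw using fun i => exists_gaussian_norm_sub_le_min hT (x i)
  have hball {z : ι → ℤ} (hz : ∀ i, |(z i : ℝ)| ≤ ‖x i‖ / T) :
      ∑ i, |(z i : ℝ)| ^ p ≤ R / T ^ p :=
    calc ∑ i, |(z i : ℝ)| ^ p ≤ ∑ i, (‖x i‖ / T) ^ p := by
          gcongr with i
          exact hz i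
      _ = (∑ i, ‖x i‖ ^ p) / T ^ p := by
          rw [sum_div]
          exact sum_congr rfl fun i _ => div_rpow (norm_nonneg _) hT.le p
      _ ≤ R / T ^ p := by gcongr
  refine ⟨Sum.elim z w, ?_, fun i => ?_⟩
  · simp only [latticeBall, Set.mem_ofPred_eq, Fintype.sum_sum_type, Sum.elim_inl, Sum.elim_inr]
    linarith [hball hz, hball hw]
  · have hq : 0 ≤ q := hp.le.trans hpq
    calc ‖x i - gaussianPoint T (Sum.elim z w) i‖ ^ q ≤ (2 * min ‖x i‖ T) ^ q := by
          gcongr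
          exact hzw i
      _ = 2 ^ q * min ‖x i‖ T ^ q := mul_rpow two_pos.le (by positivity)
      _ ≤ 2 ^ q * (T ^ (q - p) * ‖x i‖ ^ p) := by
          gcongr
          exact min_rpow_le_rpow_sub_mul_rpow hT (norm_nonneg _) hp hpq
      _ = 2 ^ q * T ^ (q - p) * ‖x i‖ ^ p := (mul_assoc _ _ _).symm

end Rounding

section EntropyNumber

lemma entropyNumber_le_of_mk_le {Λ α : Type*} [AddCommGroup Λ] {N₁ N₂ : Λ → ℝ≥0∞} {k : ℕ}
    {ε : ℝ≥0∞} (hε : 0 < ε) (hα : #α ≤ ((2 ^ (k - 1) : ℕ) : Cardinal)) (c : α → Λ)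
    (hc : ∀ x, N₁ x ≤ 1 → ∃ a, N₂ (x - c a) ≤ ε) : entropyNumber N₁ N₂ k ≤ ε := by
  obtain ⟨e⟩ : Nonempty (α ↪ Fin (2 ^ (k - 1))) := by
    rw [← Cardinal.lift_mk_le', Cardinal.mk_fin, Cardinal.lift_natCast]
    exact Cardinal.lift_le_nat_iff.2 hα
  refine sInf_le ⟨hε, Function.extend e c 0, fun x hx => ?_⟩
  obtain ⟨a, ha⟩ := hc x hx
  exact ⟨e a, by rwa [e.injective.extend_apply]⟩

end EntropyNumber

section Morrey

variable {d j : ℕ}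

lemma mem_piFinset_Ico_iff_inUnitCube (m : Fin d → ℤ) :
    m ∈ Fintype.piFinset (fun _ => Ico 0 (2 ^ j)) ↔ inUnitCube d j m := by
  simp [inUnitCube]

noncomputable instance : Fintype {m : Fin d → ℤ // inUnitCube d j m} :=
  Fintype.subtype _ mem_piFinset_Ico_iff_inUnitCube

instance : Nonempty {m : Fin d → ℤ // inUnitCube d j m} :=
  ⟨⟨0, fun _ => by simp⟩⟩

variable (d j) in
lemma card_inUnitCube :
    (Fintype.card {m : Fin d → ℤ // inUnitCube d j m} : ℝ) = 2 ^ ((j : ℝ) * d) := by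
  have hcard : Fintype.card {m : Fin d → ℤ // inUnitCube d j m} = (2 ^ j) ^ d := by
    rw [Fintype.card_of_subtype _ mem_piFinset_Ico_iff_inUnitCube, Fintype.card_piFinset]
    simp [Int.toNat_pow_of_nonneg]
  rw [hcard, rpow_mul two_pos.le]
  norm_cast

lemma inUnitCube_of_cubeSub {ν : ℕ} {m k : Fin d → ℤ} (hν : ν ≤ j) (hk : inUnitCube d ν k)
    (hm : cubeSub d j ν m k) : inUnitCube d j m := fun i => by
  refine ⟨(mul_nonneg (hk i).1 (by positivity)).trans (hm i).1, (hm i).2.trans_le ?_⟩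
  calc (k i + 1) * 2 ^ (j - ν) ≤ 2 ^ ν * 2 ^ (j - ν) := by
        gcongr
        exact (hk i).2
    _ = 2 ^ j := pow_mul_pow_sub 2 hν

lemma cubeSub_zero_zero : (fun m => cubeSub d j 0 m 0) = inUnitCube d j := by
  ext m
  simp [cubeSub, inUnitCube]

lemma tsum_cubeSub_rpow_le_mul_mNorm {u p : ℝ} (x : (Fin d → ℤ) → ℂ) {ν : ℕ} {k : Fin d → ℤ}
    (hν : ν ≤ j) (hk : inUnitCube d ν k) :
    (∑' m : {m : Fin d → ℤ // cubeSub d j ν m k}, (‖x m.1‖₊ : ℝ≥0∞) ^ p) ^ (1 / p) ≤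
      2 ^ (-(d * ((j : ℝ) - ν) * (1 / u - 1 / p))) * mNorm d u p j x := by
  have hle := le_iSup (fun νk : {νk : ℕ × (Fin d → ℤ) // νk.1 ≤ j ∧ inUnitCube d νk.1 νk.2} =>
    (2 : ℝ≥0∞) ^ ((d : ℝ) * ((j : ℝ) - (νk.1.1 : ℝ)) * (1 / u - 1 / p)) *
      (∑' m : {m : Fin d → ℤ // cubeSub d j νk.1.1 m νk.1.2},
        ((‖x m.1‖₊ : ℝ≥0∞)) ^ p) ^ (1 / p)) ⟨(ν, k), hν, hk⟩
  rw [ENNReal.rpow_neg, ← ENNReal.div_eq_inv_mul, ENNReal.le_div_iff_mul_le (by simp) (by simp),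
    mul_comm]
  exact hle

lemma tsum_cubeSub_rpow_rpow_le {u p q : ℝ} (hp : 0 < p) (hq : 0 < q) (x : (Fin d → ℤ) → ℂ)
    {ν : ℕ} {k : Fin d → ℤ} (hν : ν ≤ j) (hk : inUnitCube d ν k) :
    (∑' m : {m : Fin d → ℤ // cubeSub d j ν m k}, (‖x m.1‖₊ : ℝ≥0∞) ^ p) ^ (1 / q) ≤
      2 ^ (((j : ℝ) - ν) * d * ((1 - p / u) / q)) * mNorm d u p j x ^ (p / q) := by
  have hexp : 1 / q = 1 / p * (p / q) := by field_simp
  rw [hexp, ENNReal.rpow_mul]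
  refine (ENNReal.rpow_le_rpow (tsum_cubeSub_rpow_le_mul_mNorm (u := u) x hν hk)
    (by positivity)).trans_eq ?_
  rw [ENNReal.mul_rpow_of_nonneg _ _ (by positivity), ← ENNReal.rpow_mul]
  congr 2
  simp only [div_eq_mul_inv]
  field_simp
  ring

lemma lqNorm_le_mul_mNorm (u p : ℝ) (x : (Fin d → ℤ) → ℂ) :
    lqNorm d p j x ≤ 2 ^ ((j : ℝ) * d * (1 / p - 1 / u)) * mNorm d u p j x := by
  have h := tsum_cubeSub_rpow_le_mul_mNorm (u := u) (p := p) x (Nat.zero_le j)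
    (k := 0) fun _ => by simp
  rw [cubeSub_zero_zero] at h
  refine h.trans_eq ?_
  congr 2
  push_cast
  ring

lemma lqNorm_eq_ofReal {p : ℝ} (hp : 0 < p) (x : (Fin d → ℤ) → ℂ) :
    lqNorm d p j x =
      ENNReal.ofReal ((∑ m : {m : Fin d → ℤ // inUnitCube d j m}, ‖x m‖ ^ p) ^ (1 / p)) := by
  rw [lqNorm, tsum_fintype, ← ENNReal.ofReal_rpow_of_nonneg (by positivity) (by positivity),
    ENNReal.ofReal_sum_of_nonneg fun _ _ => by positivity]
  congr 1
  refine sum_congr rfl fun m _ => ?_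
  rw [← ENNReal.ofReal_rpow_of_nonneg (norm_nonneg _) hp.le, ofReal_norm, enorm_eq_nnnorm]

lemma two_rpow_eq_ofReal (t : ℝ) : (2 : ℝ≥0∞) ^ t = ENNReal.ofReal (2 ^ t) := by
  rw [← ENNReal.ofReal_rpow_of_pos two_pos, ENNReal.ofReal_ofNat]

lemma sum_rpow_le_of_mNorm_le_one {u p : ℝ} (hp : 0 < p) {x : (Fin d → ℤ) → ℂ}
    (hx : mNorm d u p j x ≤ 1) :
    ∑ m : {m : Fin d → ℤ // inUnitCube d j m}, ‖x m‖ ^ p ≤ 2 ^ ((j : ℝ) * d * (1 - p / u)) := by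
  have hlq : lqNorm d p j x ≤ 2 ^ ((j : ℝ) * d * (1 / p - 1 / u)) :=
    (lqNorm_le_mul_mNorm u p x).trans (mul_le_of_le_one_right' hx)
  rw [lqNorm_eq_ofReal hp, two_rpow_eq_ofReal, ENNReal.ofReal_le_ofReal_iff (by positivity),
    one_div, rpow_inv_le_iff_of_pos (by positivity) (by positivity) hp,
    ← rpow_mul two_pos.le] at hlq
  convert hlq using 2
  field_simp

-- On a cube of volume `2^(-ν d)` both sides carry powers of `2^(d (j - ν))`; the exponent is
-- nonnegative, so the worst cube is the unit cube.
lemma mNorm_le_of_rpow_le {u₁ p₁ u₂ p₂ : ℝ} (hp₁ : 0 < p₁) (hp₂ : 0 < p₂)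
    (hu : p₁ / u₁ ≤ p₂ / u₂) {A : ℝ≥0∞} {x y : (Fin d → ℤ) → ℂ}
    (hxy : ∀ m, inUnitCube d j m → (‖y m‖₊ : ℝ≥0∞) ^ p₂ ≤ A * (‖x m‖₊ : ℝ≥0∞) ^ p₁) :
    mNorm d u₂ p₂ j y ≤ A ^ (1 / p₂) * 2 ^ ((j : ℝ) * d * ((p₂ / u₂ - p₁ / u₁) / p₂)) *
      mNorm d u₁ p₁ j x ^ (p₁ / p₂) := by
  refine iSup_le fun ⟨⟨ν, k⟩, hν, hk⟩ => ?_
  dsimp only at hν hk ⊢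
  have hsum : ∑' m : {m : Fin d → ℤ // cubeSub d j ν m k}, (‖y m.1‖₊ : ℝ≥0∞) ^ p₂ ≤
      A * ∑' m : {m : Fin d → ℤ // cubeSub d j ν m k}, (‖x m.1‖₊ : ℝ≥0∞) ^ p₁ := by
    rw [← ENNReal.tsum_mul_left]
    exact ENNReal.tsum_le_tsum fun m => hxy m (inUnitCube_of_cubeSub hν hk m.2)
  have hexp : d * ((j : ℝ) - ν) * (1 / u₂ - 1 / p₂) + ((j : ℝ) - ν) * d * ((1 - p₁ / u₁) / p₂) =
      ((j : ℝ) - ν) * d * ((p₂ / u₂ - p₁ / u₁) / p₂) := by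
    simp only [div_eq_mul_inv]
    field_simp
    ring
  have : 0 ≤ (p₂ / u₂ - p₁ / u₁) / p₂ := div_nonneg (sub_nonneg.2 hu) hp₂.le
  calc _ ≤ 2 ^ (d * ((j : ℝ) - ν) * (1 / u₂ - 1 / p₂)) * (A ^ (1 / p₂) *
        (2 ^ (((j : ℝ) - ν) * d * ((1 - p₁ / u₁) / p₂)) * mNorm d u₁ p₁ j x ^ (p₁ / p₂))) := by
        gcongr
        refine (ENNReal.rpow_le_rpow hsum (by positivity)).trans ?_
        rw [ENNReal.mul_rpow_of_nonneg _ _ (by positivity)]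
        gcongr
        exact tsum_cubeSub_rpow_rpow_le hp₁ hp₂ x hν hk
    _ = A ^ (1 / p₂) * 2 ^ (((j : ℝ) - ν) * d * ((p₂ / u₂ - p₁ / u₁) / p₂)) *
        mNorm d u₁ p₁ j x ^ (p₁ / p₂) := by
        rw [← hexp, ENNReal.rpow_add _ _ two_ne_zero ENNReal.ofNat_ne_top]
        ring
    _ ≤ _ := by
        gcongr
        · exact one_le_two
        · exact sub_le_self _ ν.cast_nonneg

lemma entropyNumber_mNorm_le_of_mk_latticeBall_le {u₁ p₁ u₂ p₂ T : ℝ} {k : ℕ} (hp₁ : 0 < p₁)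
    (hp : p₁ ≤ p₂) (hu : p₁ / u₁ ≤ p₂ / u₂) (hT : 0 < T)
    (hcard : #(latticeBall ({m // inUnitCube d j m} ⊕ {m // inUnitCube d j m}) p₁
      (2 * (2 ^ ((j : ℝ) * d * (1 - p₁ / u₁)) / T ^ p₁))) ≤ ((2 ^ (k - 1) : ℕ) : Cardinal)) :
    entropyNumber (mNorm d u₁ p₁ j) (mNorm d u₂ p₂ j) k ≤
      ENNReal.ofReal (2 * T ^ (1 - p₁ / p₂) *
        2 ^ ((j : ℝ) * d * ((p₂ / u₂ - p₁ / u₁) / p₂))) := by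
  have hp₂ : 0 < p₂ := hp₁.trans_le hp
  refine entropyNumber_le_of_mk_le (ENNReal.ofReal_pos.2 (by positivity)) hcard
    (fun f => Function.extend Subtype.val (gaussianPoint T f.1) 0) fun x hx => ?_
  obtain ⟨f, hf, hfx⟩ := exists_gaussianPoint_near hp₁ hp hT (sum_rpow_le_of_mNorm_le_one hp₁ hx)
  refine ⟨⟨f, hf⟩, ?_⟩
  have hpt (m) (hm : inUnitCube d j m) :
      (‖(x - Function.extend Subtype.val (gaussianPoint T f) 0) m‖₊ : ℝ≥0∞) ^ p₂ ≤
        ENNReal.ofReal (2 ^ p₂ * T ^ (p₂ - p₁)) * (‖x m‖₊ : ℝ≥0∞) ^ p₁ := by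
    have h := ENNReal.ofReal_le_ofReal (hfx ⟨m, hm⟩)
    rw [ENNReal.ofReal_mul (by positivity), ← ENNReal.ofReal_rpow_of_nonneg (norm_nonneg _) hp₁.le,
      ← ENNReal.ofReal_rpow_of_nonneg (norm_nonneg _) hp₂.le, ofReal_norm, ofReal_norm] at h
    rw [Pi.sub_apply]
    rwa [← Subtype.val_injective.extend_apply (gaussianPoint T f) 0 ⟨m, hm⟩] at h
  have hmesh : (2 ^ p₂ * T ^ (p₂ - p₁)) ^ (1 / p₂) = 2 * T ^ (1 - p₁ / p₂) := by
    rw [mul_rpow (by positivity) (by positivity), ← rpow_mul two_pos.le, ← rpow_mul hT.le,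
      mul_one_div_cancel hp₂.ne', rpow_one, mul_one_div, sub_div, div_self hp₂.ne']
  calc _ ≤ _ := mNorm_le_of_rpow_le hp₁ hp₂ hu hpt
    _ ≤ _ := mul_le_of_le_one_right' (ENNReal.rpow_le_one hx (by positivity))
    _ = _ := by
        rw [ENNReal.ofReal_rpow_of_nonneg (by positivity) (by positivity), hmesh,
          two_rpow_eq_ofReal, ← ENNReal.ofReal_mul (by positivity)]

-- The mesh size `T` is chosen so that the lattice points needed are those counted by
-- `exists_mk_latticeBall_le_two_pow` with `g = s / (1 / p₁ - 1 / p₂)`.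
lemma exists_entropyNumber_mNorm_le {u₁ p₁ u₂ p₂ s : ℝ} (hp₁ : 0 < p₁) (hp : p₁ < p₂)
    (hu : p₁ / u₁ ≤ p₂ / u₂) (hs : 1 / p₁ - 1 / p₂ < s) :
    ∃ c : ℝ, 0 < c ∧ ∀ d j k : ℕ, 1 ≤ k → entropyNumber (mNorm d u₁ p₁ j) (mNorm d u₂ p₂ j) k ≤
      ENNReal.ofReal (c * 2 ^ ((j : ℝ) * d * (1 / u₂ - 1 / u₁)) * (2 ^ ((j : ℝ) * d) / k) ^ s) := by
  have hp₂ : 0 < p₂ := hp₁.trans hp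
  have hδ : 0 < 1 / p₁ - 1 / p₂ := sub_pos.2 (one_div_lt_one_div_of_lt hp₁ hp)
  set δ := 1 / p₁ - 1 / p₂ with hδ_def
  set g := s / δ
  have hg : 1 < g := (one_lt_div hδ).2 hs
  have hgδ : g * δ = s := div_mul_cancel₀ s hδ.ne'
  obtain ⟨c, hc, hcard⟩ := exists_mk_latticeBall_le_two_pow hp₁ hg
  refine ⟨2 * (2 ^ g / c) ^ δ, by positivity, fun d j k hk => ?_⟩
  have hk0 : (0 : ℝ) < k := by exact_mod_cast hk
  set N : ℝ := 2 ^ ((j : ℝ) * d) with hN_def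
  have hN : 0 < N := by positivity
  have hNpow (t : ℝ) : (2 : ℝ) ^ ((j : ℝ) * d * t) = N ^ t := rpow_mul two_pos.le _ t
  set V : ℝ := 2 ^ g / c * (N / k) ^ g * N ^ (-(p₁ / u₁)) with hV_def
  have hV : 0 < V := by positivity
  have hradius : 2 * (N ^ (1 - p₁ / u₁) / (V ^ (1 / p₁)) ^ p₁) =
      c * (N + N) * (k / (N + N)) ^ g := by
    rw [← rpow_mul hV.le, one_div_mul_cancel hp₁.ne', rpow_one, hV_def, ← two_mul,
      div_rpow hk0.le (by positivity), mul_rpow two_pos.le hN.le, div_rpow hN.le hk0.le,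
      rpow_neg hN.le, rpow_sub hN, rpow_one]
    field_simp
  have hmesh : (V ^ (1 / p₁)) ^ (1 - p₁ / p₂) =
      (2 ^ g / c) ^ δ * (N / k) ^ s * N ^ (-(p₁ / u₁) * δ) := by
    have hexp : 1 / p₁ * (1 - p₁ / p₂) = δ := by rw [hδ_def]; field_simp
    rw [← rpow_mul hV.le, hexp, hV_def, mul_rpow (by positivity) (by positivity),
      mul_rpow (by positivity) (by positivity), ← rpow_mul hN.le,
      ← rpow_mul (by positivity : 0 ≤ N / k), hgδ]
  have hexp : 1 / u₂ - 1 / u₁ = -(p₁ / u₁) * δ + (p₂ / u₂ - p₁ / u₁) / p₂ := by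
    simp only [hδ_def, div_eq_mul_inv]
    field_simp
    ring
  have hball := hcard ({m : Fin d → ℤ // inUnitCube d j m} ⊕ {m // inUnitCube d j m}) k hk
  rw [Fintype.card_sum, Nat.cast_add, card_inUnitCube, ← hN_def, ← hradius, ← hNpow] at hball
  refine (entropyNumber_mNorm_le_of_mk_latticeBall_le hp₁ hp.le hu (by positivity)
    hball).trans_eq ?_
  rw [hmesh, hNpow, hNpow, hexp, rpow_add hN]
  ring_nf

end Morrey

-- Since `1 / 0 = 0`, the value `u = 0` stands for `u = ∞`.
theorem stmt16_general (d : ℕ) (u1 p1 u2 p2 : ℝ) (hp1 : 0 < p1) (r : ℝ) (h1 : p1 < p2)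
    (h2 : p1 / u1 ≤ p2 / u2) (hrp : 1 / p1 - 1 / p2 < 1 / r) :
    ∃ c : ℝ, 0 < c ∧ ∀ j : ℕ, ∀ k : ℕ, 1 ≤ k →
      (k : ℝ≥0∞) ^ (1 / r) * entropyNumber (mNorm d u1 p1 j) (mNorm d u2 p2 j) k ≤
        ENNReal.ofReal c * (2 : ℝ≥0∞) ^ (((j : ℝ) * d) * (1 / r - 1 / u1 + 1 / u2)) := by
  obtain ⟨c, hc, hentropy⟩ := exists_entropyNumber_mNorm_le hp1 h1 h2 hrp
  refine ⟨c, hc, fun j k hk => ?_⟩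
  have hk0 : (0 : ℝ) < k := by exact_mod_cast hk
  calc (k : ℝ≥0∞) ^ (1 / r) * entropyNumber (mNorm d u1 p1 j) (mNorm d u2 p2 j) k
      ≤ ENNReal.ofReal (k ^ (1 / r)) * ENNReal.ofReal
          (c * 2 ^ ((j : ℝ) * d * (1 / u2 - 1 / u1)) * (2 ^ ((j : ℝ) * d) / k) ^ (1 / r)) := by
        rw [← ENNReal.ofReal_rpow_of_pos hk0, ENNReal.ofReal_natCast]
        gcongr
        exact hentropy d j k hk
    _ = ENNReal.ofReal c * 2 ^ ((j : ℝ) * d * (1 / r - 1 / u1 + 1 / u2)) := by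
        rw [two_rpow_eq_ofReal, ← ENNReal.ofReal_mul (by positivity), ← ENNReal.ofReal_mul hc.le,
          div_rpow (by positivity) hk0.le, ← rpow_mul two_pos.le,
          show 1 / r - 1 / u1 + 1 / u2 = (1 / u2 - 1 / u1) + 1 / r by ring, mul_add,
          rpow_add two_pos]
        field_simp

theorem stmt16 (d : ℕ) (hd : 1 ≤ d) (u1 p1 u2 p2 : ℝ)
    (hp1 : 0 < p1) (hp1u1 : p1 ≤ u1) (hp2 : 0 < p2) (hp2u2 : p2 ≤ u2) (r : ℝ) (hr : 0 < r)
    (h1 : p1 < p2) (h2 : p2 / u2 > p1 / u1)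
    (hrp : 1 / r > 1 / p1 - 1 / p2) :
    ∃ c : ℝ, 0 < c ∧ ∀ j : ℕ, ∀ k : ℕ, 1 ≤ k →
      ((k : ℝ≥0∞)) ^ (1 / r) * entropyNumber (mNorm d u1 p1 j) (mNorm d u2 p2 j) k ≤
        ENNReal.ofReal c * (2 : ℝ≥0∞) ^ (((j : ℝ) * d) * (1 / r - 1 / u1 + 1 / u2)) :=
  stmt16_general d u1 p1 u2 p2 hp1 r h1 h2.le hrp
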